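/- Lemma 3, Case 1 (intra-sub-community edge insertion, endpoint merged later): Let m, α, γ, w, a, b be real numbers with m > 0, α > 0, γ > 0 and w ≥ 0, and assume the pre-update removal gain is nonpositive, i.e. −w/(2·m) + γ·a·b/(4·m²) ≤ 0. If the post-insertion removal gain is positive, i.e. −(w + 2·α)/(2·(m + α)) + γ·(a + α)·(b + α)/(4·(m + α)²) > 0, then α > (4/γ)·m − (a + b). -/

import Mathlib

/-!
Clearing denominators, the removal gain has the sign of `γ * a * b - 2 * m * w`. Inserting an edge
of weight `α` changes this quantity by exactly `α * (γ * (a + b + α) - (4 * (m + α) + 2 * w))`, and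
this change must be positive if the gain passes from nonpositive to positive.
-/

section RemovalGain

variable {K : Type*} [Field K]

/-- The modularity gain `ΔM(v → ∅, γ)` of moving a vertex `v` out of its sub-community, in a graph
of total edge weight `m`. Only the numerical data enter: the weight `w` between `v` and the
subsequence `U` merged before it, and the weighted degrees `a = d(v)` and `b = d(U)`. -/
def removalGain (γ m w a b : K) : K :=
  -w / (2 * m) + γ * a * b / (4 * m ^ 2)

theorem four_mul_sq_mul_removalGain [NeZero (2 : K)] {m : K} (hm : m ≠ 0) (γ w a b : K) :
    4 * m ^ 2 * removalGain γ m w a b = γ * a * b - 2 * m * w := by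
  have four_ne_zero : (4 : K) ≠ 0 := by
    rw [← two_add_two_eq_four, ← two_mul]
    exact mul_ne_zero two_ne_zero two_ne_zero
  unfold removalGain
  field_simp
  ring

theorem scaled_removalGain_insertion_sub [NeZero (2 : K)] {m α : K}
    (hm : m ≠ 0) (hmα : m + α ≠ 0) (γ w a b : K) :
    4 * (m + α) ^ 2 * removalGain γ (m + α) (w + 2 * α) (a + α) (b + α) -
        4 * m ^ 2 * removalGain γ m w a b =
      α * (γ * (a + b + α) - (4 * (m + α) + 2 * w)) := by
  rw [four_mul_sq_mul_removalGain hm, four_mul_sq_mul_removalGain hmα]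
  ring

theorem lemma3_case1_intra_insertion_later_endpoint_general
    [LinearOrder K] [IsStrictOrderedRing K] {m α γ w a b : K}
    (hm : 0 < m) (hα : 0 < α) (hpre : removalGain γ m w a b ≤ 0)
    (hpost : 0 < removalGain γ (m + α) (w + 2 * α) (a + α) (b + α)) :
    4 * (m + α) + 2 * w < γ * (a + b + α) := by
  have hmα : 0 < m + α := add_pos hm hα
  have scaled_pre_nonpos : 4 * m ^ 2 * removalGain γ m w a b ≤ 0 :=
    mul_nonpos_of_nonneg_of_nonpos (by positivity) hpre
  have scaled_post_pos :
      0 < 4 * (m + α) ^ 2 * removalGain γ (m + α) (w + 2 * α) (a + α) (b + α) :=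
    mul_pos (by positivity) hpost
  have increment_pos : 0 < α * (γ * (a + b + α) - (4 * (m + α) + 2 * w)) := by
    rw [← scaled_removalGain_insertion_sub hm.ne' hmα.ne']
    exact sub_pos.2 (scaled_pre_nonpos.trans_lt scaled_post_pos)
  exact sub_pos.1 (pos_of_mul_pos_right increment_pos hα.le)

end RemovalGain

theorem lemma3_case1_intra_insertion_later_endpoint
    (m α γ w a b : ℝ)
    (hm : 0 < m) (hα : 0 < α) (hγ : 0 < γ) (hw : 0 ≤ w)
    (hpre : -w / (2 * m) + γ * a * b / (4 * m ^ 2) ≤ 0)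
    (hpost : -(w + 2 * α) / (2 * (m + α)) + γ * (a + α) * (b + α) / (4 * (m + α) ^ 2) > 0) :
    α > (4 / γ) * m - (a + b) := by
  rw [gt_iff_lt, sub_lt_iff_lt_add', div_mul_eq_mul_div, div_lt_iff₀' hγ]
  linarith [lemma3_case1_intra_insertion_later_endpoint_general hm hα hpre hpost]
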